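/- There exists a linear code over the field with 4 elements of length 18, dimension 11, minimum distance exactly 3, and locality 2; its parameters attain the Singleton-type bound d ≤ n − k − ⌈k/r⌉ + 2 for codes of length n, dimension k, minimum distance d, and locality r, and its length satisfies n = q^2 + 2 for q = 4. -/

import Mathlib

/-!
Regard the coordinates as points fibred over a base, each point carrying a value of a function that
separates the points of a fibre. Take the words whose sum over every fibre is zero and which are
orthogonal to the separating function. The fibre checks let every coordinate be recovered from the
rest of its fibre; the extra global check makes any two columns of the parity-check matrix
independent, so nonzero words have weight at least three. Three points of one fibre have columns
in a space of dimension two, so a word of weight three exists.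

On a cubic surface `w ^ 3 = g(x, y, z)` over the field with four elements, the base is the plane
`[x, y, z]` and `w` separates the three points of a split fibre. Only this separation matters for
the parameters, so the points may be any product of a base with a set of values.
-/

open Finset Function

section ParityCheck

variable {R M ι : Type*} [Fintype ι] [DecidableEq R]

lemma hammingNorm_eq_natCard [Zero R] (x : ι → R) : hammingNorm x = Nat.card {i // x i ≠ 0} := by
  rw [Nat.card_eq_fintype_card, Fintype.card_subtype, hammingNorm]

lemma lt_hammingNorm_of_linearIndepOn [Ring R] [AddCommGroup M] [Module R M] {v : ι → M} {d : ℕ}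
    (hv : ∀ s : Finset ι, #s ≤ d → LinearIndepOn R v s) {x : ι → R}
    (hx : Fintype.linearCombination R v x = 0) (hx0 : x ≠ 0) : d < hammingNorm x := by
  by_contra! hd
  have hsum : ∑ i with x i ≠ 0, x i • v i = 0 := by
    rw [sum_filter_of_ne fun i _ hi => left_ne_zero_of_smul hi]
    exact hx
  refine hx0 (funext fun i => by_contra fun hi => hi ?_)
  exact linearIndepOn_finset_iff.1 (hv _ hd) x hsum i (by simpa using hi)

end ParityCheck

section CommRing

variable {R ι B : Type*} [CommRing R] [DecidableEq B]

/-- The column at the coordinate `i` of the parity-check matrix of `fiberCode π f`: one row for each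
fibre of `π`, and a last row with entries `f i`. -/
def checkColumn (π : ι → B) (f : ι → R) (i : ι) : (B → R) × R :=
  (Pi.single (π i) 1, f i)

variable [Fintype ι] {π : ι → B} {f : ι → R}

/-- The linear code of the words on `ι` whose sum over each fibre of `π : ι → B` is zero and which
are orthogonal to `f`, given as the space of linear relations between the parity-check columns. -/
def fiberCode (π : ι → B) (f : ι → R) : Submodule R (ι → R) :=
  LinearMap.ker (Fintype.linearCombination R (checkColumn π f))

lemma sum_fiber_eq_zero_of_mem_fiberCode {x : ι → R} (hx : x ∈ fiberCode π f) (b : B) :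
    ∑ i with π i = b, x i = 0 := by
  have h := congrFun (congrArg Prod.fst (LinearMap.mem_ker.1 hx)) b
  simpa [Fintype.linearCombination_apply, checkColumn, Prod.fst_sum, Pi.single_apply, sum_filter,
    eq_comm] using h

lemma eq_of_mem_fiberCode_of_eqOn_fiber {x y : ι → R} (hx : x ∈ fiberCode π f)
    (hy : y ∈ fiberCode π f) {i : ι} (h : ∀ j, π j = π i → j ≠ i → x j = y j) : x i = y i := by
  have hsub := sum_fiber_eq_zero_of_mem_fiberCode (sub_mem hx hy) (π i)
  rw [sum_eq_single_of_mem i (by simp)] at hsub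
  · exact sub_eq_zero.1 hsub
  · intro j hj hji
    exact sub_eq_zero.2 (h j (by simpa using hj) hji)

lemma exists_recovery_set_fiberCode {r : ℕ} (hr : ∀ b, #{i | π i = b} ≤ r + 1) (i : ι) :
    ∃ I : Finset ι, i ∉ I ∧ #I ≤ r ∧
      ∀ x ∈ fiberCode π f, ∀ y ∈ fiberCode π f, (∀ j ∈ I, x j = y j) → x i = y i := by
  classical
  refine ⟨({j | π j = π i} : Finset ι).erase i, notMem_erase _ _, ?_, fun x hx y hy h => ?_⟩
  · rw [card_erase_of_mem (by simp)]
    exact Nat.sub_le_of_le_add (hr _)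
  · exact eq_of_mem_fiberCode_of_eqOn_fiber hx hy fun j hj hji => h j (by simp [hj, hji])

lemma exists_mem_fiberCode_hammingNorm_eq_three [DecidableEq R]
    (hf : Injective fun i => (π i, f i)) {b : B} (hb : 2 < #{i | π i = b}) :
    ∃ x ∈ fiberCode π f, hammingNorm x = 3 := by
  classical
  obtain ⟨i, j, k, hi, hj, hk, hij, hik, hjk⟩ := two_lt_card_iff.1 hb
  rw [mem_filter_univ] at hi hj hk
  have hfij : f i ≠ f j := fun h => hij (hf (Prod.ext (hi.trans hj.symm) h))
  have hfik : f i ≠ f k := fun h => hik (hf (Prod.ext (hi.trans hk.symm) h))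
  have hfjk : f j ≠ f k := fun h => hjk (hf (Prod.ext (hj.trans hk.symm) h))
  -- The entries are the 2 × 2 minors of the matrix with columns (1, f i), (1, f j), (1, f k).
  refine ⟨Pi.single i (f j - f k) + Pi.single j (f k - f i) + Pi.single k (f i - f j), ?_, ?_⟩
  · rw [fiberCode, LinearMap.mem_ker]
    simp only [map_add, Fintype.linearCombination_apply_single, checkColumn, hi, hj, hk]
    ext
    · simp only [Prod.fst_add, Prod.smul_fst, Prod.fst_zero, Pi.add_apply, Pi.smul_apply,
        Pi.zero_apply, smul_eq_mul]
      ring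
    · simp only [Prod.snd_add, Prod.smul_snd, Prod.snd_zero, smul_eq_mul]
      ring
  · rw [hammingNorm, card_eq_three]
    refine ⟨i, j, k, hij, hik, hjk, ?_⟩
    ext l
    simp only [mem_filter_univ, mem_insert, mem_singleton, Pi.add_apply, Pi.single_apply]
    grind

end CommRing

section Field

variable {F ι B : Type*} [Field F] [DecidableEq B] {π : ι → B} {f : ι → F}

lemma linearIndepOn_checkColumn (hf : Injective fun i => (π i, f i)) {s : Finset ι}
    (hs : #s ≤ 2) : LinearIndepOn F (checkColumn π f) s := by
  classical
  obtain h | h | h : #s = 0 ∨ #s = 1 ∨ #s = 2 := by omega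
  · simp [card_eq_zero.1 h]
  · obtain ⟨i, rfl⟩ := card_eq_one.1 h
    simp [checkColumn]
  · obtain ⟨i, j, hij, rfl⟩ := card_eq_two.1 h
    have hi : checkColumn π f i ≠ 0 := fun h => by
      simpa [checkColumn] using congrArg Prod.fst h
    rw [coe_pair, linearIndepOn_pair_iff _ hij hi]
    intro c hc
    obtain ⟨hfst, hsnd⟩ := Prod.ext_iff.1 hc
    have hcoord : c * (Pi.single (π i) 1 : B → F) (π j) = 1 := by
      simpa [checkColumn] using congrFun hfst (π j)
    have hπ : π i = π j := by
      by_contra h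
      simp [Pi.single_eq_of_ne' h] at hcoord
    have hc1 : c = 1 := by simpa [hπ] using hcoord
    exact hij (hf (Prod.ext hπ (by simpa [checkColumn, hc1] using hsnd)))

lemma span_range_checkColumn_eq_top [Finite B] (hπ : Surjective π) {i j : ι} (hij : π i = π j)
    (hf : f i ≠ f j) : Submodule.span F (Set.range (checkColumn π f)) = ⊤ := by
  cases nonempty_fintype B
  set S := Submodule.span F (Set.range (checkColumn π f))
  have hcol (l : ι) : checkColumn π f l ∈ S := Submodule.subset_span ⟨l, rfl⟩
  have hlast (c : F) : ((0 : B → F), c) ∈ S := by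
    have h := S.smul_mem (c / (f i - f j)) (S.sub_mem (hcol i) (hcol j))
    simpa [checkColumn, hij, sub_ne_zero.2 hf] using h
  have hfib (b : B) : (Pi.single b (1 : F), (0 : F)) ∈ S := by
    obtain ⟨l, rfl⟩ := hπ b
    simpa [checkColumn] using S.sub_mem (hcol l) (hlast (f l))
  refine eq_top_iff.2 fun ⟨y, c⟩ _ => ?_
  have hy : (y, c) = ∑ b, y b • (Pi.single b (1 : F), (0 : F)) + (0, c) := by
    ext b
    · simp [Prod.fst_sum, Pi.single_apply]
    · simp [Prod.snd_sum]
  rw [hy]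
  exact S.add_mem (S.sum_mem fun b _ => S.smul_mem _ (hfib b)) (hlast c)

variable [Fintype ι]

lemma three_le_hammingNorm_of_mem_fiberCode [DecidableEq F] (hf : Injective fun i => (π i, f i))
    {x : ι → F} (hx : x ∈ fiberCode π f) (hx0 : x ≠ 0) : 3 ≤ hammingNorm x :=
  lt_hammingNorm_of_linearIndepOn (fun _ => linearIndepOn_checkColumn hf) hx hx0

lemma finrank_fiberCode_add [Fintype B] (hπ : Surjective π) (hf : Injective fun i => (π i, f i))
    {b : B} (hb : 1 < #{i | π i = b}) :
    Module.finrank F (fiberCode π f) + Fintype.card B + 1 = Fintype.card ι := by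
  obtain ⟨i, hi, j, hj, hij⟩ := one_lt_card.1 hb
  rw [mem_filter_univ] at hi hj
  have hπij := hi.trans hj.symm
  have hfij : f i ≠ f j := fun h => hij (hf (Prod.ext hπij h))
  have h := LinearMap.finrank_range_add_finrank_ker
    (Fintype.linearCombination F (checkColumn π f))
  rw [Fintype.range_linearCombination, span_range_checkColumn_eq_top hπ hπij hfij, finrank_top,
    Module.finrank_prod, Module.finrank_self, Module.finrank_fintype_fun_eq_card,
    Module.finrank_fintype_fun_eq_card] at h
  rw [fiberCode]
  omega

end Field

section ProductFibers

variable {F : Type*} {m s : ℕ}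

lemma divNat_surjective (hs : 0 < s) : Surjective (Fin.divNat : Fin (m * s) → Fin m) := fun b =>
  ⟨Fin.mkDivMod b ⟨0, hs⟩, Fin.divNat_mkDivMod _ _⟩

lemma divNat_modNat_injective {w : Fin s → F} (hw : Injective w) :
    Injective fun i : Fin (m * s) => (i.divNat, w i.modNat) :=
  (injective_id.prodMap hw).comp finProdFinEquiv.symm.injective

lemma card_divNat_fiber (b : Fin m) : #{i : Fin (m * s) | i.divNat = b} = s := by
  refine (card_nbij' Fin.modNat (Fin.mkDivMod b) (t := univ) (by simp) (by simp)
    (fun i hi => ?_) (fun j _ => Fin.modNat_mkDivMod b j)).trans (card_fin s)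
  obtain rfl : i.divNat = b := by simpa using hi
  exact Fin.divNat_mkDivMod_modNat i

end ProductFibers

lemma ceil_div_eq_of_add_one_eq_mul {K : Type*} [Field K] [LinearOrder K] [IsStrictOrderedRing K]
    [FloorSemiring K] {k r m : ℕ} (hr : 2 ≤ r) (hk : k + 1 = m * r) : ⌈(k : K) / r⌉₊ = m := by
  have hm : m ≠ 0 := by
    rintro rfl
    omega
  have hkK : (k : K) + 1 = m * r := mod_cast hk
  have hrK : (2 : K) ≤ r := mod_cast hr
  rw [Nat.ceil_eq_iff hm, Nat.cast_pred (Nat.pos_of_ne_zero hm), lt_div_iff₀ (by linarith),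
    div_le_iff₀ (by linarith)]
  constructor <;> linarith

theorem optimal_LRC_F4_cubic_surface_general {F : Type*} [Field F] {n k r m : ℕ} (hr : 2 ≤ r)
    (hn : n = m * (r + 1)) (hk : k + 1 = m * r) {w : Fin (r + 1) → F} (hw : Injective w) :
    (∃ C : Submodule F (Fin n → F),
      Module.finrank F C = k ∧
      (∀ x : Fin n → F, x ∈ C → x ≠ 0 → 3 ≤ Nat.card {i : Fin n // x i ≠ 0}) ∧
      (∃ x : Fin n → F, x ∈ C ∧ x ≠ 0 ∧ Nat.card {i : Fin n // x i ≠ 0} = 3) ∧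
      (∀ i : Fin n, ∃ I : Finset (Fin n), i ∉ I ∧ I.card ≤ r ∧
        ∀ x ∈ C, ∀ y ∈ C, (∀ j ∈ I, x j = y j) → x i = y i)) ∧
    3 = n - k - ⌈(k : ℚ) / r⌉₊ + 2 := by
  classical
  subst hn
  have hm : 0 < m := Nat.pos_of_ne_zero (by rintro rfl; omega)
  have hinj := divNat_modNat_injective (m := m) hw
  have hcard := card_divNat_fiber (s := r + 1) (⟨0, hm⟩ : Fin m)
  refine ⟨⟨fiberCode Fin.divNat (fun i => w i.modNat), ?_, fun x hx hx0 => ?_, ?_,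
    exists_recovery_set_fiberCode fun b => (card_divNat_fiber b).le⟩, ?_⟩
  · have h := finrank_fiberCode_add (divNat_surjective r.succ_pos) hinj (by rw [hcard]; omega)
    simp only [Fintype.card_fin] at h
    linarith
  · exact hammingNorm_eq_natCard x ▸ three_le_hammingNorm_of_mem_fiberCode hinj hx hx0
  · obtain ⟨x, hx, hx3⟩ := exists_mem_fiberCode_hammingNorm_eq_three hinj (by rw [hcard]; omega)
    exact ⟨x, hx, hammingNorm_ne_zero_iff.1 (by omega), hammingNorm_eq_natCard x ▸ hx3⟩
  · rw [ceil_div_eq_of_add_one_eq_mul hr hk, Nat.mul_succ]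
    omega

/-- There is a linear code over the field with 4 elements of length 18, dimension 11,
minimum distance exactly 3, and locality 2; its parameters meet the Singleton-type
bound d ≤ n - k - ⌈k/r⌉ + 2 with equality, and n = 4 ^ 2 + 2 for q = 4. -/
theorem optimal_LRC_F4_cubic_surface :
    (∃ C : Submodule (GaloisField 2 2) (Fin 18 → GaloisField 2 2),
      Module.finrank (GaloisField 2 2) C = 11 ∧
      (∀ x : Fin 18 → GaloisField 2 2, x ∈ C → x ≠ 0 →
        3 ≤ Nat.card {i : Fin 18 // x i ≠ 0}) ∧
      (∃ x : Fin 18 → GaloisField 2 2, x ∈ C ∧ x ≠ 0 ∧ Nat.card {i : Fin 18 // x i ≠ 0} = 3) ∧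
      (∀ i : Fin 18, ∃ I : Finset (Fin 18), i ∉ I ∧ I.card ≤ 2 ∧
        ∀ x ∈ C, ∀ y ∈ C, (∀ j ∈ I, x j = y j) → x i = y i)) ∧
    (3 : ℕ) = 18 - 11 - ⌈(11 : ℚ) / 2⌉₊ + 2 ∧
    (18 : ℕ) = 4 ^ 2 + 2 := by
  let e : GaloisField 2 2 ≃ Fin 4 := Finite.equivFinOfCardEq (GaloisField.card 2 2 two_ne_zero)
  obtain ⟨hC, hd⟩ := optimal_LRC_F4_cubic_surface_general (n := 18) (k := 11) (m := 6) le_rfl rfl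
    rfl (e.symm.injective.comp (Fin.castLE_injective (show 2 + 1 ≤ 4 by norm_num)))
  exact ⟨hC, mod_cast hd, by norm_num⟩
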